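/- Let n ≥ 2 and consider the following random input: a uniformly random permutation τ of [n] is drawn, and n items arrive sequentially where item j has value 1 for agents τ(j), τ(j+1), …, τ(n) and value 0 for agents τ(1), …, τ(j-1). An online (possibly randomized) algorithm allocates each item upon arrival, observing only the values of items seen so far. The offline optimal egalitarian social welfare is always 1, but the probability that the online algorithm achieves egalitarian welfare 1 is at most 1/n!. -/

import Mathlib

/-- Value of item `j` for agent `i` under permutation `τ`: item `j` is worth 1
to agents `τ(j), τ(j+1), …, τ(n)` and 0 to `τ(1), …, τ(j-1)`. -/
noncomputable def itemVal (n : ℕ) (τ : Equiv.Perm (Fin n)) (j i : Fin n) : ℝ :=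
  if j ≤ τ.symm i then 1 else 0

/-- Egalitarian social welfare of the allocation `B` (item `j` goes to agent `B j`). -/
noncomputable def egalWelfare (n : ℕ) (τ : Equiv.Perm (Fin n)) (B : Fin n → Fin n) : ℝ :=
  ⨅ i : Fin n, ∑ j : Fin n, if B j = i then itemVal n τ j i else 0

/-! Each agent can only be satisfied by an item arriving no later than its own position in `τ`.
By induction along the arrival order, positive welfare therefore forces item `j` to go to agent
`τ j`: the earlier items have already been spent on the earlier agents. An online algorithm never
sees `τ j` before allocating item `j`, so two permutations on which it succeeds agree at `j` as
soon as they agree before `j`; hence it succeeds on at most one of the `n!` permutations. -/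

/-- An online rule produces an output at time `j` that depends only on the part of the input `f`
strictly before `j`. Inputs range over a type `F` of functions on the time set. For allocation
algorithms `f` is the permutation `τ`: the items up to `j` reveal exactly `τ` strictly before `j`,
since agent `τ i` stops valuing items after item `i`. -/
def IsOnline {F ι β γ : Type*} [FunLike F ι β] [LT ι] (A : F → ι → γ) : Prop :=
  ∀ f g : F, ∀ j : ι, (∀ i : ι, i < j → f i = g i) → A f j = A g j

theorem IsOnline.eq_of_apply_eq_coe {F ι β : Type*} [FunLike F ι β] [LT ι] [WellFoundedLT ι]
    {A : F → ι → β} (hA : IsOnline A) {f g : F} (hf : A f = f) (hg : A g = g) : f = g := by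
  refine DFunLike.ext f g fun j => ?_
  induction j using WellFoundedLT.induction with
  | _ j agree_before =>
    calc
      f j = A f j := (congrFun hf j).symm
      _ = A g j := hA f g j agree_before
      _ = g j := congrFun hg j

theorem eq_id_of_forall_exists_le_apply_eq {α : Type*} [PartialOrder α] [WellFoundedLT α]
    {f : α → α} (hf : ∀ a, ∃ b ≤ a, f b = a) : f = id := by
  funext a
  induction a using WellFoundedLT.induction with
  | _ a fixed_below =>
    obtain ⟨b, hba, hb⟩ := hf a
    obtain rfl | hlt := hba.eq_or_lt
    · exact hb
    · exact absurd ((fixed_below b hlt).symm.trans hb) hlt.ne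

section Welfare

variable {n : ℕ} {τ : Equiv.Perm (Fin n)} {B : Fin n → Fin n}

theorem egalWelfare_eq_iInf_card (τ : Equiv.Perm (Fin n)) (B : Fin n → Fin n) :
    egalWelfare n τ B = ⨅ i, (Finset.card {j | B j = i ∧ j ≤ τ.symm i} : ℝ) := by
  simp only [egalWelfare, itemVal, ← ite_and, Finset.sum_boole]

theorem egalWelfare_coe_perm [NeZero n] (τ : Equiv.Perm (Fin n)) : egalWelfare n τ τ = 1 := by
  have useful_items (i : Fin n) :
      ({j | τ j = i ∧ j ≤ τ.symm i} : Finset (Fin n)) = {τ.symm i} := by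
    ext j
    simp only [Finset.mem_filter_univ, Finset.mem_singleton, ← Equiv.eq_symm_apply]
    exact ⟨And.left, fun h => ⟨h, h.le⟩⟩
  simp only [egalWelfare_eq_iInf_card, useful_items, Finset.card_singleton, Nat.cast_one,
    ciInf_const]

theorem exists_le_symm_apply_eq_of_egalWelfare_pos (h : 0 < egalWelfare n τ B) (i : Fin n) :
    ∃ j ≤ τ.symm i, B j = i := by
  rw [egalWelfare_eq_iInf_card] at h
  have card_pos := h.trans_le (ciInf_le (Set.finite_range _).bddBelow i)
  obtain ⟨j, hj⟩ := Finset.card_pos.1 (Nat.cast_pos.1 card_pos)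
  obtain ⟨hBj, hji⟩ := (Finset.mem_filter_univ j).1 hj
  exact ⟨j, hji, hBj⟩

theorem eq_coe_perm_of_egalWelfare_pos (h : 0 < egalWelfare n τ B) : B = τ := by
  have symm_comp_eq_id : τ.symm ∘ B = id := by
    refine eq_id_of_forall_exists_le_apply_eq fun k => ?_
    obtain ⟨j, hjk, hj⟩ := exists_le_symm_apply_eq_of_egalWelfare_pos h (τ k)
    exact ⟨j, by simpa using hjk, by simp [hj]⟩
  exact (Equiv.symm_comp_eq τ id B).1 symm_comp_eq_id

theorem IsOnline.subsingleton_setOf_egalWelfare_pos {A : Equiv.Perm (Fin n) → Fin n → Fin n}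
    (hA : IsOnline A) : {τ | 0 < egalWelfare n τ (A τ)}.Subsingleton := fun _ hσ _ hτ =>
  hA.eq_of_apply_eq_coe (eq_coe_perm_of_egalWelfare_pos hσ) (eq_coe_perm_of_egalWelfare_pos hτ)

end Welfare

theorem stmt_10 (n : ℕ) (hn : 2 ≤ n) (A : Equiv.Perm (Fin n) → Fin n → Fin n)
    (honline : ∀ τ τ' : Equiv.Perm (Fin n), ∀ j : Fin n,
      (∀ j' : Fin n, j' < j → τ j' = τ' j') → A τ j = A τ' j) :
    (∀ τ : Equiv.Perm (Fin n), egalWelfare n τ (fun j => τ j) = 1) ∧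
      ((Nat.card {τ : Equiv.Perm (Fin n) // 1 ≤ egalWelfare n τ (A τ)} : ℝ) /
          (Nat.factorial n) ≤ 1 / (Nat.factorial n)) := by
  have : NeZero n := ⟨by omega⟩
  refine ⟨egalWelfare_coe_perm, ?_⟩
  have successes_subsingleton : {τ | 1 ≤ egalWelfare n τ (A τ)}.Subsingleton :=
    (IsOnline.subsingleton_setOf_egalWelfare_pos honline).anti <|
      Set.ofPred_subset_ofPred.2 fun _ => zero_lt_one.trans_le
  have card_le_one : Nat.card {τ : Equiv.Perm (Fin n) // 1 ≤ egalWelfare n τ (A τ)} ≤ 1 :=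
    Finite.card_le_one_iff_subsingleton.2 ((Set.subsingleton_coe _).2 successes_subsingleton)
  gcongr
  exact_mod_cast card_le_one
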